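/- For every prime power q ≥ 4 there exists a finite q-regular simple graph of girth 8 with exactly 2q(q² − 2) vertices. -/

import Mathlib

/-!
Put the symplectic form `area ⊖ area` on `F² ⊕ F²`, where `F` has `q` elements. The `q + 1` lines
of the generalized quadrangle `W(3, q)` through a point, and the `q + 1` points on a line, are
thinned out to `q` as follows. With `e = (1, 0)`, delete the hyperplane `(e, e)^⊥` with the lines
through its pole `(e, e)`, and delete the mutually orthogonal lines `F² ⊕ 0` and `0 ⊕ F²` of
`PG(3, q)`, pointwise, with every line of the quadrangle that meets both. A remaining line is the
graph of some `A ∈ SL(2, F)` with `A e ≠ e`; it has lost only its point in the hyperplane. A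
remaining point has lost only the line joining its two components.

There remain `(q³ + q² + q + 1) - (q² + q + 1) - 2q = q³ - 2q` points, and, by double counting, as
many lines. Digons and triangles are absent because `W(3, q)` has none, and an explicit quadrangle
survives over every field, so the shortest cycle of the Levi graph has length `8`.
-/

open SimpleGraph Configuration

lemma modEq_mul_iff {j k m n : ℕ} :
    j ≡ k [MOD m * n] ↔ j ≡ k [MOD m] ∧ j / m ≡ k / m [MOD n] := by
  constructor
  · intro h
    refine ⟨h.of_mul_right n, ?_⟩
    rw [Nat.ModEq, ← Nat.mod_mul_right_div_self, h, Nat.mod_mul_right_div_self]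
  · rintro ⟨hmod, hdiv⟩
    rw [Nat.ModEq, Nat.mod_mul, hmod, hdiv, ← Nat.mod_mul]

theorem cycleGraph_isContained_iff_exists_periodic {V : Type*} {G : SimpleGraph V} {n : ℕ}
    (hn : 2 ≤ n) :
    cycleGraph n ⊑ G ↔
      ∃ c : ℕ → V, (∀ j k, c j = c k ↔ j ≡ k [MOD n]) ∧ ∀ k, G.Adj (c k) (c (k + 1)) := by
  have : NeZero n := ⟨by omega⟩
  have adj_iff (i j : Fin n) : (cycleGraph n).Adj i j ↔ i = j + 1 ∨ j = i + 1 := by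
    obtain ⟨n, rfl⟩ := Nat.exists_eq_add_of_le' hn
    rw [cycleGraph_adj, sub_eq_iff_eq_add', sub_eq_iff_eq_add']
  constructor
  · rintro ⟨f⟩
    refine ⟨fun k => f (Fin.ofNat n k), fun j k => ?_, fun k => ?_⟩
    · exact f.injective.eq_iff.trans Fin.ext_iff
    · refine f.toHom.map_adj ((adj_iff _ _).mpr (.inr ?_))
      simp [Fin.ext_iff, Fin.val_add]
  · rintro ⟨c, hc, hadj⟩
    have adj_succ (i : Fin n) : G.Adj (c i) (c ↑(i + 1)) := by
      convert hadj i using 1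
      simp [hc, Fin.val_add, Nat.ModEq]
    refine ⟨⟨⟨fun i => c i, fun {i j} hij => ?_⟩, fun i j hij => ?_⟩⟩
    · rcases (adj_iff i j).mp hij with rfl | rfl
      exacts [(adj_succ j).symm, adj_succ i]
    · exact Fin.ext (((hc _ _).mp hij).eq_of_lt_of_lt i.2 j.2)

/-- The Levi (incidence) graph of a point-line configuration: points and lines are the vertices,
and incident pairs are the edges. -/
def leviGraph (P L : Type*) [Membership P L] : SimpleGraph (P ⊕ L) where
  Adj
    | .inl p, .inr l => p ∈ l
    | .inr l, .inl p => p ∈ l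
    | _, _ => False
  symm := ⟨by rintro (p | l) (p' | l') h <;> exact h⟩
  loopless := ⟨by rintro (p | l) h <;> exact h⟩

section LeviGraph

variable {P L : Type*} [Membership P L]

lemma leviGraph_adj_inl_inr {p : P} {l : L} :
    (leviGraph P L).Adj (.inl p) (.inr l) ↔ p ∈ l := Iff.rfl

lemma leviGraph_adj_inr_inl {p : P} {l : L} :
    (leviGraph P L).Adj (.inr l) (.inl p) ↔ p ∈ l := Iff.rfl

lemma isLeft_eq_not_of_leviGraph_adj {v w : P ⊕ L} (h : (leviGraph P L).Adj v w) :
    w.isLeft = !v.isLeft := by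
  rcases v with p | l <;> rcases w with p' | l' <;> first | rfl | exact h.elim

variable (P L) in
/-- The proper colouring of the Levi graph that separates points from lines. -/
def leviGraph.bicoloring : (leviGraph P L).Coloring Bool :=
  .mk Sum.isLeft fun h => by rw [isLeft_eq_not_of_leviGraph_adj h]; exact Bool.self_ne_not _

lemma ncard_neighborSet_leviGraph_inl (p : P) :
    ((leviGraph P L).neighborSet (.inl p)).ncard = lineCount L p := by
  have : (leviGraph P L).neighborSet (.inl p) = .inr '' {l : L | p ∈ l} := by
    ext v
    rcases v with p' | l <;> simp [leviGraph]
  rw [this, Set.ncard_image_of_injective _ Sum.inr_injective]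
  rfl

lemma ncard_neighborSet_leviGraph_inr (l : L) :
    ((leviGraph P L).neighborSet (.inr l)).ncard = pointCount P l := by
  have : (leviGraph P L).neighborSet (.inr l) = .inl '' {p : P | p ∈ l} := by
    ext v
    rcases v with p | l' <;> simp [leviGraph]
  rw [this, Set.ncard_image_of_injective _ Sum.inl_injective]
  rfl

theorem natCard_eq_of_lineCount_eq_of_pointCount_eq [Finite P] [Finite L] {k : ℕ} (hk : k ≠ 0)
    (hP : ∀ p : P, lineCount L p = k) (hL : ∀ l : L, pointCount P l = k) :
    Nat.card P = Nat.card L := by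
  have := Fintype.ofFinite P
  have := Fintype.ofFinite L
  have h := sum_lineCount_eq_sum_pointCount P L
  simpa [hP, hL, hk] using h

/-- Points `p 0, …, p (n - 1)` and lines `l 0, …, l (n - 1)` form an `n`-gon: they are distinct, and
the line `l i` joins `p i` to `p (i + 1)`, with indices taken modulo `n`. -/
structure IsPolygon {n : ℕ} [NeZero n] (p : Fin n → P) (l : Fin n → L) : Prop where
  injective_point : p.Injective
  injective_line : l.Injective
  mem (i : Fin n) : p i ∈ l i
  succ_mem (i : Fin n) : p (i + 1) ∈ l i

lemma IsPolygon.cycleGraph_isContained {n : ℕ} [NeZero n] {p : Fin n → P} {l : Fin n → L}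
    (h : IsPolygon p l) : cycleGraph (2 * n) ⊑ leviGraph P L := by
  rw [cycleGraph_isContained_iff_exists_periodic (by have := NeZero.pos n; omega)]
  refine ⟨fun k =>
    if Even k then .inl (p (Fin.ofNat n (k / 2))) else .inr (l (Fin.ofNat n (k / 2))),
    fun j k => ?_, fun k => ?_⟩
  · rw [modEq_mul_iff]
    have half_eq_iff : Fin.ofNat n (j / 2) = Fin.ofNat n (k / 2) ↔ j / 2 ≡ k / 2 [MOD n] :=
      Fin.ext_iff
    by_cases hj : Even j <;> by_cases hk : Even k <;>
      simp only [hj, hk, if_true, if_false, Sum.inl.injEq, Sum.inr.injEq, reduceCtorEq,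
        h.injective_point.eq_iff, h.injective_line.eq_iff, half_eq_iff] <;>
      grind [Nat.ModEq]
  · obtain ⟨i, rfl | rfl⟩ := Nat.even_or_odd' k
    · have hodd : ¬ Even (2 * i + 1) := by simp
      have hhalf : (2 * i + 1) / 2 = i := by omega
      simpa only [if_pos (even_two_mul i), if_neg hodd, hhalf, Nat.mul_div_cancel_left i two_pos]
        using leviGraph_adj_inl_inr.mpr (h.mem (Fin.ofNat n i))
    · have hodd : ¬ Even (2 * i + 1) := by simp
      have heven : Even (2 * i + 1 + 1) := by grind
      have hhalf : (2 * i + 1) / 2 = i := by omega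
      have hhalf' : (2 * i + 1 + 1) / 2 = i + 1 := by omega
      have hsucc : Fin.ofNat n i + 1 = Fin.ofNat n (i + 1) :=
        Fin.ext <| by simp [Fin.val_add]
      simpa only [if_neg hodd, if_pos heven, hhalf, hhalf', hsucc]
        using leviGraph_adj_inr_inl.mpr (h.succ_mem (Fin.ofNat n i))

lemma exists_isPolygon_of_periodic {n : ℕ} [NeZero n] {c : ℕ → P ⊕ L}
    (hc : ∀ j k, c j = c k ↔ j ≡ k [MOD 2 * n])
    (hadj : ∀ k, (leviGraph P L).Adj (c k) (c (k + 1))) (hleft : (c 0).isLeft) :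
    ∃ (p : Fin n → P) (l : Fin n → L), IsPolygon p l := by
  have hside (k : ℕ) : (c k).isLeft = decide (Even k) := by
    induction k with
    | zero => simpa using hleft
    | succ k ih => simp [isLeft_eq_not_of_leviGraph_adj (hadj k), ih, Nat.even_add_one,
      -Nat.not_even_iff_odd]
  have hpoint (i : Fin n) : ∃ p, c (2 * i) = .inl p :=
    Sum.isLeft_iff.mp <| by simp [hside]
  have hline (i : Fin n) : ∃ l, c (2 * i + 1) = .inr l :=
    Sum.isRight_iff.mp <| by rw [← Sum.not_isLeft, hside]; simp
  choose p hp using hpoint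
  choose l hl using hline
  refine ⟨p, l, fun i j hij => ?_, fun i j hij => ?_, fun i => ?_, fun i => ?_⟩
  · have := (hc _ _).mp ((hp i).trans (hij ▸ (hp j).symm))
    exact Fin.ext ((Nat.ModEq.mul_left_cancel' two_ne_zero this).eq_of_lt_of_lt i.2 j.2)
  · have := (hc _ _).mp ((hl i).trans (hij ▸ (hl j).symm))
    exact Fin.ext ((Nat.ModEq.mul_left_cancel' two_ne_zero
      (Nat.ModEq.add_right_cancel' 1 this)).eq_of_lt_of_lt i.2 j.2)
  · rw [← leviGraph_adj_inl_inr, ← hp, ← hl]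
    exact hadj _
  · rw [← leviGraph_adj_inr_inl, ← hp, ← hl]
    convert hadj _ using 1
    have hsucc : ((i + 1 : Fin n) : ℕ) ≡ i + 1 [MOD n] := by simp [Nat.ModEq, Fin.val_add]
    exact (hc _ _).mpr (hsucc.mul_left' 2)

theorem cycleGraph_isContained_leviGraph_iff {n : ℕ} [NeZero n] :
    cycleGraph (2 * n) ⊑ leviGraph P L ↔ ∃ (p : Fin n → P) (l : Fin n → L), IsPolygon p l := by
  refine ⟨fun h => ?_, fun ⟨p, l, h⟩ => h.cycleGraph_isContained⟩
  have hn : 2 ≤ 2 * n := by have := NeZero.pos n; omega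
  obtain ⟨c, hc, hadj⟩ := (cycleGraph_isContained_iff_exists_periodic hn).mp h
  by_cases hleft : (c 0).isLeft
  · exact exists_isPolygon_of_periodic hc hadj hleft
  · refine exists_isPolygon_of_periodic (c := fun k => c (k + 1)) (fun j k => ?_)
      (fun k => hadj (k + 1)) (by simpa [isLeft_eq_not_of_leviGraph_adj (hadj 0)] using hleft)
    exact (hc _ _).trans ⟨Nat.ModEq.add_right_cancel' 1, Nat.ModEq.add_right 1⟩

theorem egirth_leviGraph_eq {n : ℕ} [NeZero n] (hn : 2 ≤ n)
    (hpolygon : ∃ (p : Fin n → P) (l : Fin n → L), IsPolygon p l)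
    (hsmall : ∀ m [NeZero m], 2 ≤ m → m < n →
      ∀ (p : Fin m → P) (l : Fin m → L), ¬ IsPolygon p l) :
    (leviGraph P L).egirth = (2 * n : ℕ) := by
  apply le_antisymm
  · obtain ⟨v, w, hw, hlen⟩ := (cycleGraph_isContained_iff (by omega)).mp
      (cycleGraph_isContained_leviGraph_iff.mpr hpolygon)
    exact hlen ▸ egirth_le_length hw
  · rw [le_egirth]
    intro v w hw
    by_contra! hlt
    obtain ⟨m, hm⟩ : Even w.length := by
      rw [(leviGraph.bicoloring P L).even_length_iff_congr w]
    have := hw.three_le_length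
    have : NeZero m := ⟨by omega⟩
    obtain ⟨p, l, hpl⟩ := cycleGraph_isContained_leviGraph_iff.mp <|
      (cycleGraph_isContained_iff (by omega)).mpr ⟨v, w, hw, (two_mul m ▸ hm : w.length = 2 * m)⟩
    exact hsmall m (by omega) (by norm_cast at hlt; omega) p l hpl

end LeviGraph

theorem natCard_dual_fiber {K V : Type*} [Field K] [AddCommGroup V] [Module K V]
    [FiniteDimensional K V] {f : Module.Dual K V} (hf : f ≠ 0) (c : K) :
    Nat.card {x // f x = c} = Nat.card K ^ (Module.finrank K V - 1) := by
  have hsurj : Function.Surjective f.toAddMonoidHom :=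
    LinearMap.range_eq_top.mp (Module.Dual.range_eq_top_of_ne_zero hf)
  have hker : Nat.card {x // f x = c} = Nat.card (LinearMap.ker f) :=
    Nat.card_congr (AddMonoidHom.fiberEquivKerOfSurjective hsurj c)
  rw [hker, Module.natCard_eq_pow_finrank (K := K),
    ← Module.Dual.finrank_ker_add_one_of_ne_zero hf, Nat.add_sub_cancel]

section Area

open Matrix

lemma specialLinearGroup_smul_eq_mulVec {ι R : Type*} [Fintype ι] [DecidableEq ι] [CommRing R]
    (A : SpecialLinearGroup ι R) (v : ι → R) : A • v = (A : Matrix ι ι R) *ᵥ v := rfl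

variable {R F : Type*} [CommRing R] [Field F]

/-- The standard symplectic form on `R²`: the signed area of the parallelogram spanned by two
vectors. It is invariant under `SL(2, R)`. -/
def area : (Fin 2 → R) →ₗ[R] (Fin 2 → R) →ₗ[R] R :=
  Matrix.toBilin' !![0, 1; -1, 0]

lemma area_apply (u v : Fin 2 → R) : area u v = u 0 * v 1 - u 1 * v 0 := by
  simp [area, toBilin'_apply, Fin.sum_univ_two, sub_eq_add_neg]

lemma area_unit_left (v : Fin 2 → R) : area ![1, 0] v = v 1 := by
  simp [area_apply]

lemma area_smul_smul (A : SpecialLinearGroup (Fin 2) R) (u v : Fin 2 → R) :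
    area (A • u) (A • v) = area u v := by
  have hdet := A.det_coe
  rw [det_fin_two] at hdet
  simp only [area_apply, specialLinearGroup_smul_eq_mulVec, mulVec, dotProduct, Fin.sum_univ_two]
  linear_combination (u 0 * v 1 - u 1 * v 0) * hdet

lemma area_inv_smul_left (A : SpecialLinearGroup (Fin 2) R) (u v : Fin 2 → R) :
    area (A⁻¹ • u) v = area u (A • v) := by
  rw [← area_smul_smul A, smul_inv_smul]

lemma area_smul_eq_smul_add_smul (u v x : Fin 2 → R) :
    area u v • x = area x v • u + area u x • v := by
  ext i
  fin_cases i <;> simp [area_apply] <;> ring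

lemma exists_smul_unit_eq {u v : Fin 2 → R} (h : area u v = 1) :
    ∃ A : SpecialLinearGroup (Fin 2) R, A • ![1, 0] = u ∧ A • ![0, 1] = v := by
  obtain ⟨A, hA⟩ : ∃ A : SpecialLinearGroup (Fin 2) R,
      (A : Matrix (Fin 2) (Fin 2) R) = !![u 0, v 0; u 1, v 1] :=
    ⟨⟨_, by rw [det_fin_two_of, ← h, area_apply]; ring⟩, rfl⟩
  refine ⟨A, ?_, ?_⟩ <;> ext i <;> fin_cases i <;> simp [specialLinearGroup_smul_eq_mulVec, hA]

lemma exists_smul_eq_and_smul_eq {u v w z : Fin 2 → R} (huv : area u v = 1) (hwz : area w z = 1) :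
    ∃ A : SpecialLinearGroup (Fin 2) R, A • u = w ∧ A • v = z := by
  obtain ⟨B, rfl, rfl⟩ := exists_smul_unit_eq huv
  obtain ⟨C, rfl, rfl⟩ := exists_smul_unit_eq hwz
  exact ⟨C * B⁻¹, by simp [mul_smul], by simp [mul_smul]⟩

lemma area_ne_zero {u : Fin 2 → F} (hu : u ≠ 0) : area u ≠ 0 := by
  intro h
  apply hu
  ext i
  fin_cases i
  · simpa [area_apply] using congr($h ![0, 1])
  · simpa [area_apply] using congr($h ![1, 0])

lemma exists_area_eq_one {u : Fin 2 → F} (hu : u ≠ 0) : ∃ v, area u v = 1 :=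
  LinearMap.range_eq_top.mp (Module.Dual.range_eq_top_of_ne_zero (area_ne_zero hu)) 1

lemma natCard_area_eq {u : Fin 2 → F} (hu : u ≠ 0) (c : F) :
    Nat.card {v // area u v = c} = Nat.card F := by
  rw [natCard_dual_fiber (area_ne_zero hu), Module.finrank_fin_fun, pow_one]

lemma exists_eq_smul_of_area_eq_zero {u v : Fin 2 → F} (hu : u ≠ 0) (h : area u v = 0) :
    ∃ c : F, v = c • u := by
  obtain ⟨w, hw⟩ := exists_area_eq_one hu
  exact ⟨area v w, by simpa [hw, h] using area_smul_eq_smul_add_smul u w v⟩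

lemma eq_of_area_eq {u v x y : Fin 2 → F} (huv : area u v ≠ 0) (hu : area u x = area u y)
    (hv : area x v = area y v) : x = y :=
  smul_right_injective _ huv <| by
    simp only [area_smul_eq_smul_add_smul u v, hu, hv]

lemma eq_of_smul_eq_of_smul_eq {A B : SpecialLinearGroup (Fin 2) F} {u v : Fin 2 → F}
    (huv : area u v ≠ 0) (hu : A • u = B • u) (hv : A • v = B • v) : A = B := by
  refine SpecialLinearGroup.toLin'_injective <| LinearEquiv.ext fun x =>
    eq_of_area_eq (u := A • u) (v := A • v) ?_ ?_ ?_
  · rwa [area_smul_smul]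
  · exact (area_smul_smul A u x).trans (hu ▸ (area_smul_smul B u x).symm)
  · exact (area_smul_smul A x v).trans (hv ▸ (area_smul_smul B x v).symm)

theorem natCard_smul_eq {u w : Fin 2 → F} (hu : u ≠ 0) (hw : w ≠ 0) :
    Nat.card {A : SpecialLinearGroup (Fin 2) F // A • u = w} = Nat.card F := by
  obtain ⟨v, hv⟩ := exists_area_eq_one hu
  rw [← natCard_area_eq hw 1]
  refine Nat.card_congr (Equiv.ofBijective
    (fun A => ⟨A.1 • v, by simpa only [A.2, hv] using area_smul_smul A.1 u v⟩)
    ⟨fun A B hAB => ?_, fun z => ?_⟩)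
  · exact Subtype.ext (eq_of_smul_eq_of_smul_eq (hv ▸ one_ne_zero) (A.2.trans B.2.symm)
      congr(($hAB).1))
  · obtain ⟨A, hAu, hAv⟩ := exists_smul_eq_and_smul_eq hv z.2
    exact ⟨⟨A, hAu⟩, Subtype.ext hAv⟩

end Area

namespace SymplecticQuadrangle

open Matrix

/-- The points of the structure obtained from `W(3, F)`. On `F² ⊕ F²`, with the symplectic form
`area ⊖ area`, these are the projective points off the hyperplane `(e, e)^⊥`, where `e = (1, 0)`,
and off the lines `F² ⊕ 0` and `0 ⊕ F²`. The equation `snd_one` normalizes the representing vector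
`(fst, snd)` by pairing it with `(e, e)`. -/
@[ext]
structure Point (F : Type*) [Field F] where
  fst : Fin 2 → F
  snd : Fin 2 → F
  fst_ne_zero : fst ≠ 0
  snd_ne_zero : snd ≠ 0
  snd_one : snd 1 = fst 1 + 1

/-- The lines of the structure obtained from `W(3, F)`: the graphs in `F² ⊕ F²` of the elements of
`SL(2, F)`, which are exactly the totally isotropic planes other than a product of two lines, with
those through `(e, e)` removed. -/
@[ext]
structure Line (F : Type*) [Field F] where
  mat : SpecialLinearGroup (Fin 2) F
  mat_smul_ne : mat • (![1, 0] : Fin 2 → F) ≠ ![1, 0]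

variable {F : Type*} [Field F]

instance : Membership (Point F) (Line F) where
  mem l p := l.mat • p.fst = p.snd

lemma mem_iff {p : Point F} {l : Line F} : p ∈ l ↔ l.mat • p.fst = p.snd := Iff.rfl

instance [Finite F] : Finite (Point F) :=
  .of_injective (fun p => (p.fst, p.snd)) fun _ _ h => Point.ext congr(($h).1) congr(($h).2)

instance [Finite F] : Finite (Line F) :=
  .of_injective Line.mat fun _ _ => Line.ext

lemma smul_unit_ne_of_smul_fst_eq_snd {A : SpecialLinearGroup (Fin 2) F} {p : Point F}
    (h : A • p.fst = p.snd) : A • (![1, 0] : Fin 2 → F) ≠ ![1, 0] := by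
  intro hA
  have harea := area_smul_smul A ![1, 0] p.fst
  rw [hA, h, area_unit_left, area_unit_left, p.snd_one] at harea
  exact one_ne_zero (add_eq_left.mp harea)

lemma area_fst_ne_zero_of_mem {p p' : Point F} {l : Line F} (hne : p ≠ p') (hp : p ∈ l)
    (hp' : p' ∈ l) : area p.fst p'.fst ≠ 0 := by
  intro h
  obtain ⟨c, hfst⟩ := exists_eq_smul_of_area_eq_zero p.fst_ne_zero h
  have hsnd : p'.snd = c • p.snd := by rw [← hp, ← hp', hfst, smul_comm]
  obtain rfl : c = 1 := by
    have h₁ := congr($hfst 1)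
    have h₂ := congr($hsnd 1)
    simp only [p.snd_one, p'.snd_one, Pi.smul_apply, smul_eq_mul] at h₁ h₂
    linear_combination h₁ - h₂
  rw [one_smul] at hfst hsnd
  exact hne (Point.ext hfst.symm hsnd.symm)

lemma line_eq_of_mem {p p' : Point F} {l m : Line F} (hne : p ≠ p') (hpl : p ∈ l) (hp'l : p' ∈ l)
    (hpm : p ∈ m) (hp'm : p' ∈ m) : l = m :=
  Line.ext <| eq_of_smul_eq_of_smul_eq (area_fst_ne_zero_of_mem hne hpl hp'l)
    (hpl.trans hpm.symm) (hp'l.trans hp'm.symm)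

lemma area_fst_eq_area_snd {p p' : Point F} {l : Line F} (hp : p ∈ l) (hp' : p' ∈ l) :
    area p.fst p'.fst = area p.snd p'.snd := by
  rw [← hp, ← hp', area_smul_smul]

-- A point collinear with two points of a line is orthogonal to the line, and a totally isotropic
-- plane is its own orthogonal complement.
theorem mem_of_collinear {p p' r : Point F} {l m m' : Line F} (hne : p ≠ p') (hpl : p ∈ l)
    (hp'l : p' ∈ l) (hpm : p ∈ m) (hrm : r ∈ m) (hp'm' : p' ∈ m') (hrm' : r ∈ m') : r ∈ l := by
  refine eq_of_area_eq (u := p.snd) (v := p'.snd) ?_ ?_ ?_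
  · rw [← area_fst_eq_area_snd hpl hp'l]
    exact area_fst_ne_zero_of_mem hne hpl hp'l
  · rw [← area_fst_eq_area_snd hpm hrm, ← hpl, area_smul_smul]
  · rw [← area_fst_eq_area_snd hrm' hp'm', ← hp'l, area_smul_smul]

theorem not_isPolygon_two (p : Fin 2 → Point F) (l : Fin 2 → Line F) : ¬ IsPolygon p l := fun h =>
  h.injective_line.ne zero_ne_one <| line_eq_of_mem (h.injective_point.ne zero_ne_one)
    (h.mem 0) (h.succ_mem 0) (h.succ_mem 1) (h.mem 1)

theorem not_isPolygon_three (p : Fin 3 → Point F) (l : Fin 3 → Line F) : ¬ IsPolygon p l := by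
  intro h
  have hmem : p 2 ∈ l 0 :=
    mem_of_collinear (h.injective_point.ne zero_ne_one) (h.mem 0) (h.succ_mem 0)
      (h.succ_mem 2) (h.mem 2) (h.mem 1) (h.succ_mem 1)
  exact h.injective_line.ne zero_ne_one <|
    line_eq_of_mem (h.injective_point.ne (by decide : (1 : Fin 3) ≠ 2)) (h.succ_mem 0) hmem
      (h.mem 1) (h.succ_mem 1)

theorem exists_isPolygon_four : ∃ (p : Fin 4 → Point F) (l : Fin 4 → Line F), IsPolygon p l := by
  let a (x : F) : Point F := ⟨![1, 0], ![x, 1], by simp, by simp, by simp⟩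
  let b (y : F) : Point F := ⟨![y, -1], ![1, 0], by simp, by simp, by simp⟩
  have hab (x y : F) : a x ≠ b y := fun h => by simpa [a, b] using congr(($h).fst 1)
  have ha : a.Injective := fun x x' h => by simpa [a] using congr(($h).snd 0)
  have hb : b.Injective := fun y y' h => by simpa [b] using congr(($h).fst 0)
  have hjoin (x y : F) : ∃ l : Line F, a x ∈ l ∧ b y ∈ l := by
    obtain ⟨A, hAb, hAa⟩ := exists_smul_eq_and_smul_eq (u := ![y, -1]) (v := ![1, 0])
      (w := ![1, 0]) (z := ![x, 1]) (by simp [area_apply]) (by simp [area_apply])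
    exact ⟨⟨A, smul_unit_ne_of_smul_fst_eq_snd (p := a x) hAa⟩, hAa, hAb⟩
  choose l hla hlb using hjoin
  have hl {x x' y y' : F} : l x y = l x' y' ↔ x = x' ∧ y = y' := by
    refine ⟨fun h => ⟨?_, ?_⟩, fun ⟨hx, hy⟩ => hx ▸ hy ▸ rfl⟩
    · refine ha (Point.ext rfl ?_)
      exact (hla x y).symm.trans (h ▸ hla x' y')
    · refine hb (Point.ext ?_ rfl)
      exact smul_left_cancel (l x y).mat ((hlb x y).trans (h ▸ hlb x' y').symm)
  refine ⟨![a 0, b 0, a 1, b 1], ![l 0 0, l 1 0, l 1 1, l 0 1], ?_, ?_, ?_, ?_⟩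
  · intro i j
    fin_cases i <;> fin_cases j <;> simp [hab, (hab _ _).symm, ha.eq_iff, hb.eq_iff]
  · intro i j
    fin_cases i <;> fin_cases j <;> simp [hl]
  · intro i
    fin_cases i <;> first | exact hla _ _ | exact hlb _ _
  · intro i
    fin_cases i <;> first | exact hla _ _ | exact hlb _ _

variable (F) in
theorem girth_leviGraph : (leviGraph (Point F) (Line F)).girth = 8 := by
  have hsmall (m : ℕ) [NeZero m] (h₂ : 2 ≤ m) (h₄ : m < 4) :
      ∀ (p : Fin m → Point F) (l : Fin m → Line F), ¬ IsPolygon p l := by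
    obtain rfl | rfl : m = 2 ∨ m = 3 := by omega
    exacts [not_isPolygon_two, not_isPolygon_three]
  rw [girth, egirth_leviGraph_eq (by norm_num) exists_isPolygon_four hsmall, ENat.toNat_natCast]

lemma area_inv_smul_unit_sub_unit (A : SpecialLinearGroup (Fin 2) F) (u : Fin 2 → F) :
    area (A⁻¹ • ![1, 0] - ![1, 0]) u = (A • u) 1 - u 1 := by
  rw [map_sub, LinearMap.sub_apply, area_inv_smul_left, area_unit_left, area_unit_left]

theorem pointCount_eq (l : Line F) : pointCount (Point F) l = Nat.card F := by
  have hd : l.mat⁻¹ • (![1, 0] : Fin 2 → F) - ![1, 0] ≠ 0 := by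
    rw [sub_ne_zero, Ne, inv_smul_eq_iff]
    exact l.mat_smul_ne.symm
  have hnorm {u : Fin 2 → F} : area (l.mat⁻¹ • ![1, 0] - ![1, 0]) u = 1 ↔
      (l.mat • u) 1 = u 1 + 1 := by
    rw [area_inv_smul_unit_sub_unit, sub_eq_iff_eq_add']
  rw [← natCard_area_eq hd 1, pointCount]
  refine Nat.card_congr (Equiv.ofBijective
    (fun p => ⟨p.1.fst, hnorm.mpr (by rw [mem_iff.mp p.2, p.1.snd_one])⟩)
    ⟨fun p p' h => ?_, fun u => ?_⟩)
  · have hfst : p.1.fst = p'.1.fst := congr(($h).1)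
    refine Subtype.ext (Point.ext hfst ?_)
    rw [← mem_iff.mp p.2, ← mem_iff.mp p'.2, hfst]
  · have hu : u.1 ≠ 0 := fun h => by simpa [h] using u.2
    exact ⟨⟨⟨u, l.mat • u.1, hu, (smul_ne_zero_iff_ne _).mpr hu, hnorm.mp u.2⟩, rfl⟩, rfl⟩

theorem lineCount_eq (p : Point F) : lineCount (Line F) p = Nat.card F := by
  rw [← natCard_smul_eq p.fst_ne_zero p.snd_ne_zero, lineCount]
  exact Nat.card_congr
    { toFun l := ⟨l.1.mat, l.2⟩
      invFun A := ⟨⟨A, smul_unit_ne_of_smul_fst_eq_snd A.2⟩, A.2⟩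
      left_inv _ := rfl
      right_inv _ := rfl }

/-- The affine space `F³` is the union of the points, in the coordinates `fst 0`, `fst 1`, `snd 0`,
and the two lines on which `fst` or `snd` vanishes. -/
def coordinates : Point F ⊕ F ⊕ F → F × F × F :=
  Sum.elim (fun p => (p.fst 0, p.fst 1, p.snd 0))
    (Sum.elim (fun c => (0, 0, c)) fun a => (a, -1, 0))

lemma bijective_coordinates : (coordinates (F := F)).Bijective := by
  constructor
  · rintro (p | c | a) (p' | c' | a') h <;>
      simp only [coordinates, Sum.elim_inl, Sum.elim_inr, Prod.mk.injEq] at h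
    · have hfst : p.fst = p'.fst := by ext i; fin_cases i <;> simp [h]
      have hsnd : p.snd = p'.snd := by ext i; fin_cases i <;> simp [h, p.snd_one, p'.snd_one]
      exact congr(.inl $(Point.ext hfst hsnd))
    · exact (p.fst_ne_zero (by ext i; fin_cases i <;> simp [h])).elim
    · exact (p.snd_ne_zero (by ext i; fin_cases i <;> simp [h, p.snd_one])).elim
    · exact (p'.fst_ne_zero (by ext i; fin_cases i <;> simp [← h])).elim
    · rw [h.2.2]
    · simp at h
    · exact (p'.snd_ne_zero (by ext i; fin_cases i <;> simp [← h, p'.snd_one])).elim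
    · simp at h
    · rw [h.1]
  · rintro ⟨a, b, c⟩
    by_cases hfst : ![a, b] = 0
    · exact ⟨.inr (.inl c), by simp_all [coordinates]⟩
    by_cases hsnd : ![c, b + 1] = 0
    · exact ⟨.inr (.inr a), by simp_all [coordinates, add_eq_zero_iff_eq_neg]⟩
    exact ⟨.inl ⟨![a, b], ![c, b + 1], hfst, hsnd, by simp⟩, by simp [coordinates]⟩

theorem natCard_point [Finite F] : Nat.card (Point F) = Nat.card F * (Nat.card F ^ 2 - 2) := by
  have hcard := Nat.card_congr (Equiv.ofBijective _ (bijective_coordinates (F := F)))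
  simp only [Nat.card_sum, Nat.card_prod] at hcard
  rw [Nat.mul_sub]
  have hcube : Nat.card F * Nat.card F ^ 2 = Nat.card F * (Nat.card F * Nat.card F) := by ring
  omega

theorem natCard_line [Finite F] : Nat.card (Line F) = Nat.card F * (Nat.card F ^ 2 - 2) := by
  rw [← natCard_point]
  exact (natCard_eq_of_lineCount_eq_of_pointCount_eq Nat.card_pos.ne' lineCount_eq
    pointCount_eq).symm

end SymplecticQuadrangle

open SymplecticQuadrangle in
theorem exists_q_regular_girth_eight_graph_general (q : ℕ) (hq : IsPrimePow q) :
    ∃ (V : Type) (G : SimpleGraph V), Finite V ∧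
      (∀ v : V, (G.neighborSet v).ncard = q) ∧ G.girth = 8 ∧
      Nat.card V = 2 * q * (q ^ 2 - 2) := by
  obtain ⟨p, n, hp, hn, rfl⟩ := (isPrimePow_nat_iff q).mp hq
  have : Fact p.Prime := ⟨hp⟩
  have hcard : Nat.card (GaloisField p n) = p ^ n := GaloisField.card p n hn.ne'
  refine ⟨Point (GaloisField p n) ⊕ Line (GaloisField p n), leviGraph _ _, inferInstance, ?_,
    girth_leviGraph _, ?_⟩
  · rintro (x | l)
    · rw [ncard_neighborSet_leviGraph_inl, lineCount_eq, hcard]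
    · rw [ncard_neighborSet_leviGraph_inr, pointCount_eq, hcard]
  · rw [Nat.card_sum, natCard_point, natCard_line, hcard]
    ring

/-- For every prime power `q ≥ 4` there is a finite `q`-regular graph of girth `8`
with exactly `2q(q² - 2)` vertices. -/
theorem exists_q_regular_girth_eight_graph (q : ℕ) (hq : IsPrimePow q) (h4 : 4 ≤ q) :
    ∃ (V : Type) (G : SimpleGraph V), Finite V ∧
      (∀ v : V, (G.neighborSet v).ncard = q) ∧ G.girth = 8 ∧
      Nat.card V = 2 * q * (q ^ 2 - 2) :=
  exists_q_regular_girth_eight_graph_general q hq
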